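/- arXiv:1904.01788 — 7 statements merged into one kernel-verified Lean document; each statement's English description precedes it below -/
import Mathlib

section
/- The map τ ↦ F_τ, sending a matrix τ to the column span of the (2d)×d block matrix (τ; 1_d), is a bijection from the Siegel half space H_d onto the set D_Ψ. (This is the parametrisation of polarised Hodge structures of type {(-1,0),(0,-1)} on ℤ^{2d} by the Siegel half space, Section 4.2 of the paper.) -/
open Matrix Complex

noncomputable section

/-- `ℂ^{2d}`, with the first `d` coordinates indexed by `Sum.inl` and the
last `d` coordinates indexed by `Sum.inr`. -/
abbrev Vd (d : ℕ) := (Fin d ⊕ Fin d) → ℂ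

/-- The matrix `J = [[0, -1_d],[1_d, 0]]`. -/
def Jmat (d : ℕ) : Matrix (Fin d ⊕ Fin d) (Fin d ⊕ Fin d) ℝ :=
  Matrix.fromBlocks 0 (-1) 1 0

/-- The bilinear form `ω(x,y) = xᵀ · J · y` on `ℂ^{2d}`. -/
def omegaC (d : ℕ) (x y : Vd d) : ℂ :=
  x ⬝ᵥ (((Jmat d).map (fun r : ℝ => (r : ℂ))) *ᵥ y)

/-- The set `D_Ψ` of `d`-dimensional subspaces `F ⊆ ℂ^{2d}` on which `ω` vanishes
identically and such that `i·ω(v, v̄)` is a positive real number for all nonzero `v ∈ F`. -/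
def DPsi (d : ℕ) : Set (Submodule ℂ (Vd d)) :=
  {F | Module.finrank ℂ F = d ∧
       (∀ x ∈ F, ∀ y ∈ F, omegaC d x y = 0) ∧
       (∀ v ∈ F, v ≠ 0 →
         ∃ r : ℝ, 0 < r ∧
           Complex.I * omegaC d v (fun i => (starRingEnd ℂ) (v i)) = (r : ℂ))}

/-- The `2d × d` block matrix `(τ; 1_d)`. -/
def blockTau (d : ℕ) (τ : Matrix (Fin d) (Fin d) ℂ) :
    Matrix (Fin d ⊕ Fin d) (Fin d) ℂ :=
  Matrix.of fun i j =>
    Sum.elim (fun i' => τ i' j) (fun i' => if i' = j then (1 : ℂ) else 0) i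

/-- `F_τ ⊆ ℂ^{2d}`, the column span of `(τ; 1_d)`, i.e. `{(τv, v) : v ∈ ℂ^d}`. -/
def Ftau (d : ℕ) (τ : Matrix (Fin d) (Fin d) ℂ) : Submodule ℂ (Vd d) :=
  LinearMap.range (blockTau d τ).mulVecLin

/-- The Siegel half space `H_d`: symmetric complex matrices with positive definite
imaginary part. -/
def Siegel (d : ℕ) : Set (Matrix (Fin d) (Fin d) ℂ) :=
  {τ | τᵀ = τ ∧ (τ.map Complex.im).PosDef}

theorem omega_formula (d : ℕ) (x y : Vd d) :
    omegaC d x y = ∑ i, (x (Sum.inr i) * y (Sum.inl i) - x (Sum.inl i) * y (Sum.inr i)) := by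
  have h : (Jmat d).map (fun r : ℝ => (r : ℂ)) = Matrix.fromBlocks 0 (-1) 1 0 := by
    ext i j
    rcases i with i | i <;> rcases j with j | j <;> simp [Jmat, Matrix.one_apply] <;>
      split_ifs <;> simp
  rw [omegaC, h, Matrix.fromBlocks_mulVec]
  simp [dotProduct, Fintype.sum_sum_type, Matrix.neg_mulVec, Finset.sum_sub_distrib]
  ring

theorem block_inl (d : ℕ) (τ : Matrix (Fin d) (Fin d) ℂ) (u : Fin d → ℂ) (i : Fin d) :
    (blockTau d τ *ᵥ u) (Sum.inl i) = ∑ j, τ i j * u j := by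
  simp [blockTau, Matrix.mulVec, dotProduct]

theorem block_inr (d : ℕ) (τ : Matrix (Fin d) (Fin d) ℂ) (u : Fin d → ℂ) (i : Fin d) :
    (blockTau d τ *ᵥ u) (Sum.inr i) = u i := by
  simp [blockTau, Matrix.mulVec, dotProduct]

theorem omega_block (d : ℕ) (τ : Matrix (Fin d) (Fin d) ℂ) (u w : Fin d → ℂ) :
    omegaC d (blockTau d τ *ᵥ u) (blockTau d τ *ᵥ w) =
      ∑ i, ∑ j, (τ i j - τ j i) * (u i * w j) := by
  rw [omega_formula]
  simp only [block_inl, block_inr, Finset.sum_sub_distrib, sub_mul, Finset.mul_sum,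
    Finset.sum_mul]
  congr 1
  · exact Finset.sum_congr rfl fun i _ => Finset.sum_congr rfl fun j _ => by ring
  · rw [Finset.sum_comm]
    exact Finset.sum_congr rfl fun i _ => Finset.sum_congr rfl fun j _ => by ring

theorem omega_conj (d : ℕ) (τ : Matrix (Fin d) (Fin d) ℂ) (hτ : τᵀ = τ) (u : Fin d → ℂ) :
    Complex.I * omegaC d (blockTau d τ *ᵥ u)
      (fun i => (starRingEnd ℂ) ((blockTau d τ *ᵥ u) i)) =
    ((2 * ((fun i => (u i).re) ⬝ᵥ (τ.map Complex.im *ᵥ (fun i => (u i).re)) +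
      (fun i => (u i).im) ⬝ᵥ (τ.map Complex.im *ᵥ (fun i => (u i).im))) : ℝ) : ℂ) := by
  have hs : ∀ i j, τ i j = τ j i := fun i j => by
    conv_lhs => rw [← hτ]
    rfl
  have h1 : Complex.I * omegaC d (blockTau d τ *ᵥ u)
      (fun i => (starRingEnd ℂ) ((blockTau d τ *ᵥ u) i)) =
      ∑ i, ∑ j, ((2 * (τ i j).im : ℝ) : ℂ) * (u i * (starRingEnd ℂ) (u j)) := by
    rw [omega_formula]
    simp only [block_inl, block_inr, Finset.sum_sub_distrib, map_sum, map_mul, Finset.mul_sum,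
      Finset.sum_mul, mul_sub]
    rw [Finset.sum_comm (f := fun i j => Complex.I * (τ i j * u j * (starRingEnd ℂ) (u i)))]
    simp only [← Finset.sum_sub_distrib]
    refine Finset.sum_congr rfl fun i _ => Finset.sum_congr rfl fun j _ => ?_
    rw [hs j i]
    have : ((2 * (τ i j).im : ℝ) : ℂ) = Complex.I * ((starRingEnd ℂ) (τ i j) - τ i j) := by
      apply Complex.ext <;> simp
      ring
    rw [this]
    ring
  rw [h1]
  apply Complex.ext
  · rw [Complex.ofReal_re]
    simp only [Complex.re_sum, dotProduct, Matrix.mulVec, Matrix.map_apply, Finset.mul_sum,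
      ← Finset.sum_add_distrib]
    refine Finset.sum_congr rfl fun i _ => Finset.sum_congr rfl fun j _ => ?_
    rw [Complex.re_ofReal_mul]
    simp
    ring
  · rw [Complex.ofReal_im]
    simp only [Complex.im_sum, Complex.im_ofReal_mul]
    have h2 : ∀ i j, 2 * (τ i j).im * (u i * (starRingEnd ℂ) (u j)).im =
        2 * (τ i j).im * ((u i).im * (u j).re) - 2 * (τ i j).im * ((u i).re * (u j).im) := by
      intro i j
      simp
      ring
    simp only [h2, Finset.sum_sub_distrib]
    rw [Finset.sum_comm, sub_eq_zero]
    refine Finset.sum_congr rfl fun i _ => Finset.sum_congr rfl fun j _ => ?_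
    rw [hs j i]
    ring

theorem block_inj (d : ℕ) (τ : Matrix (Fin d) (Fin d) ℂ) :
    Function.Injective (blockTau d τ).mulVecLin := by
  intro u w h
  ext i
  have := congrFun h (Sum.inr i)
  simpa [block_inr] using this

/-- The map `τ ↦ F_τ` is a bijection from the Siegel half space `H_d` onto `D_Ψ`. -/
theorem siegel_to_DPsi_bijective (d : ℕ) (hd : 1 ≤ d) :
    (∀ τ ∈ Siegel d, Ftau d τ ∈ DPsi d) ∧
    (∀ τ₁ ∈ Siegel d, ∀ τ₂ ∈ Siegel d, Ftau d τ₁ = Ftau d τ₂ → τ₁ = τ₂) ∧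
    (∀ F ∈ DPsi d, ∃ τ ∈ Siegel d, Ftau d τ = F) := by
  refine ⟨?_, ?_, ?_⟩
  · rintro τ ⟨hs, hp⟩
    have hs' : ∀ i j, τ i j = τ j i := fun i j => by
      conv_lhs => rw [← hs]
      rfl
    refine ⟨?_, ?_, ?_⟩
    · rw [Ftau, LinearMap.finrank_range_of_inj (block_inj d τ)]
      simp
    · rintro _ ⟨u, rfl⟩ _ ⟨w, rfl⟩
      simp only [Matrix.mulVecLin_apply, omega_block]
      refine Finset.sum_eq_zero fun i _ => Finset.sum_eq_zero fun j _ => ?_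
      rw [hs' i j, sub_self, zero_mul]
    · rintro _ ⟨u, rfl⟩ hne
      refine ⟨_, ?_, omega_conj d τ hs u⟩
      have hu : u ≠ 0 := by
        rintro rfl
        simp at hne
      have ha := hp.posSemidef.dotProduct_mulVec_nonneg (fun i => (u i).re)
      have hb := hp.posSemidef.dotProduct_mulVec_nonneg (fun i => (u i).im)
      simp only [star_trivial] at ha hb
      by_cases h0 : (fun i => (u i).re) = 0
      · have h1 : (fun i => (u i).im) ≠ 0 := by
          intro h1
          apply hu
          ext i
          exact Complex.ext (congrFun h0 i) (congrFun h1 i)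
        have := hp.dotProduct_mulVec_pos h1
        simp only [star_trivial] at this
        linarith
      · have := hp.dotProduct_mulVec_pos h0
        simp only [star_trivial] at this
        linarith
  · intro τ₁ _ τ₂ _ h
    ext i j
    have hm : blockTau d τ₁ *ᵥ (Pi.single j 1) ∈ Ftau d τ₂ := by
      rw [← h]
      exact ⟨_, rfl⟩
    obtain ⟨w, hw⟩ := hm
    rw [Matrix.mulVecLin_apply] at hw
    have hw2 : w = Pi.single j 1 := by
      ext k
      have := congrFun hw (Sum.inr k)
      simpa only [block_inr] using this
    subst hw2
    have := congrFun hw (Sum.inl i)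
    simp only [block_inl] at this
    simpa [Pi.single_apply] using this.symm
  · rintro F ⟨hdim, hiso, hpos⟩
    let p : F →ₗ[ℂ] (Fin d → ℂ) := (LinearMap.funLeft ℂ ℂ Sum.inr) ∘ₗ F.subtype
    have hp : Function.Injective p := by
      rw [← LinearMap.ker_eq_bot, LinearMap.ker_eq_bot']
      rintro ⟨v, hv⟩ h0
      by_contra hne
      have hne' : v ≠ 0 := fun h => hne (Subtype.ext h)
      obtain ⟨r, hr, h⟩ := hpos v hv hne'
      have h2 : ∀ i, v (Sum.inr i) = 0 := fun i => congrFun h0 i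
      rw [omega_formula] at h
      simp [h2] at h
      exact hr.ne (by exact_mod_cast h)
    let e : F ≃ₗ[ℂ] (Fin d → ℂ) := LinearEquiv.ofInjectiveOfFinrankEq p hp (by simp [hdim])
    have he : ∀ (x : F) i, e x i = (x : Vd d) (Sum.inr i) := fun x i => rfl
    let f : (Fin d → ℂ) →ₗ[ℂ] (Fin d → ℂ) :=
      (LinearMap.funLeft ℂ ℂ Sum.inl) ∘ₗ F.subtype ∘ₗ e.symm.toLinearMap
    let τ := LinearMap.toMatrix' f
    have hb : ∀ u, blockTau d τ *ᵥ u = (e.symm u : Vd d) := by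
      intro u
      ext i
      rcases i with i | i
      · rw [block_inl]
        have : (τ *ᵥ u) i = f u i := by rw [LinearMap.toMatrix'_mulVec]
        exact this
      · rw [block_inr, ← he, e.apply_symm_apply]
    have hF : Ftau d τ = F := by
      apply le_antisymm
      · rintro _ ⟨u, rfl⟩
        rw [Matrix.mulVecLin_apply, hb]
        exact (e.symm u).2
      · intro v hv
        refine ⟨e ⟨v, hv⟩, ?_⟩
        rw [Matrix.mulVecLin_apply, hb, e.symm_apply_apply]
    have hmem : ∀ u, blockTau d τ *ᵥ u ∈ F := fun u => by
      rw [hb]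
      exact (e.symm u).2
    have hs : τᵀ = τ := by
      ext i j
      have := hiso _ (hmem (Pi.single j 1)) _ (hmem (Pi.single i 1))
      rw [omega_block] at this
      simp [Pi.single_apply] at this
      exact sub_eq_zero.mp this
    refine ⟨τ, ⟨hs, ?_⟩, hF⟩
    refine Matrix.PosDef.of_dotProduct_mulVec_pos ?_ ?_
    · ext i j
      have := congrFun (congrFun hs i) j
      simp only [Matrix.transpose_apply] at this
      simp [this]
    · intro a ha
      have hne : blockTau d τ *ᵥ (fun i => (a i : ℂ)) ≠ 0 := by
        intro h
        apply ha
        ext i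
        have := congrFun h (Sum.inr i)
        rw [block_inr] at this
        simpa using this
      obtain ⟨r, hr, h⟩ := hpos _ (hmem _) hne
      rw [omega_conj d τ hs, Complex.ofReal_inj] at h
      have hz : (fun i => ((a i : ℂ)).im) = (0 : Fin d → ℝ) := by
        ext i
        simp
      rw [hz] at h
      simp only [Complex.ofReal_re, zero_dotProduct, add_zero] at h
      rw [star_trivial]
      change 0 < (fun i => a i) ⬝ᵥ (τ.map Complex.im *ᵥ (fun i => a i))
      linarith
end
end

section
/- Let τ ∈ M_d(ℂ) be symmetric. Suppose f_ℂ ∈ M_d(ℂ) and α, β, γ, δ ∈ M_d(ℂ) satisfy 2πi·f_ℂ·τ = α − τ·γ and 2πi·f_ℂ = β − τ·δ. Define f'_ℂ := (2πi)^{-1}·(−γᵀ + τ·δᵀ) and α' := −αᵀ, β' := −γᵀ, γ' := −βᵀ, δ' := −δᵀ (that is, the block matrix [[α',β'],[γ',δ']] is −f_ℤᵀ where f_ℤ = [[α,β],[γ,δ]]). Then the same two relations hold for the primed data: 2πi·f'_ℂ·τ = α' − τ·γ' and 2πi·f'_ℂ = β' − τ·δ'. (This is the matrix content of Proposition 4.3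 of the paper: the dual of the homomorphism of complex tori B_τ → A_τ determined by (f_ℂ, f_ℤ) is determined by ((2πi)^{-1}(−γᵀ + τδᵀ), −f_ℤᵀ).) -/
open Matrix Complex

noncomputable section

/-- The scalar `2πi`. -/
def twoPiI : ℂ := 2 * (Real.pi : ℂ) * Complex.I

/-- The matrix `f'_ℂ = (2πi)⁻¹ · (−γᵀ + τ·δᵀ)` of the dual homomorphism. -/
def fdual (d : ℕ) (τ γ δ : Matrix (Fin d) (Fin d) ℂ) : Matrix (Fin d) (Fin d) ℂ :=
  twoPiI⁻¹ • (-γᵀ + τ * δᵀ)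

/-- Proposition 4.3 (matrix content): if `(f_ℂ, [[α,β],[γ,δ]])` satisfies the
compatibility relations `2πi·f_ℂ·τ = α − τ·γ` and `2πi·f_ℂ = β − τ·δ` for a symmetric
`τ`, then the primed data `f'_ℂ = (2πi)⁻¹(−γᵀ + τδᵀ)` and
`[[α',β'],[γ',δ']] = [[−αᵀ,−γᵀ],[−βᵀ,−δᵀ]] = −[[α,β],[γ,δ]]ᵀ` satisfy the same two
relations. -/
theorem dual_homomorphism_relations (d : ℕ)
    (τ f α β γ δ : Matrix (Fin d) (Fin d) ℂ)
    (hτ : τᵀ = τ)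
    (h1 : twoPiI • (f * τ) = α - τ * γ)
    (h2 : twoPiI • f = β - τ * δ) :
    twoPiI • (fdual d τ γ δ * τ) = (-αᵀ) - τ * (-βᵀ) ∧
    twoPiI • fdual d τ γ δ = (-γᵀ) - τ * (-δᵀ) := by
  have hne : twoPiI ≠ 0 := by
    simp [twoPiI, Real.pi_ne_zero]
  have hf : twoPiI • fdual d τ γ δ = -γᵀ + τ * δᵀ := by
    rw [fdual, smul_smul, mul_inv_cancel₀ hne, one_smul]
  constructor
  · rw [← Matrix.smul_mul, hf]
    rw [← Matrix.smul_mul, h2] at h1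
    have h3 := congrArg Matrix.transpose h1
    simp only [Matrix.transpose_mul, Matrix.transpose_sub, hτ, mul_sub] at h3
    rw [add_mul, neg_mul, mul_neg, mul_assoc]
    have h4 : τ * (δᵀ * τ) = τ * βᵀ - (αᵀ - γᵀ * τ) := by
      rw [← h3]; abel
    rw [h4]; abel
  · rw [hf, mul_neg]; abel
end
end

section
/- Let d ≥ 1, f ∈ M_{2d}(ℤ) with det(f + fᵀ) ≠ 0, and let x ∈ ℝ^{2d} be a row vector with coordinates x₁, …, x_{2d} such that the 2d+2 real numbers 1, x₁, …, x_{2d}, x·f·xᵀ are linearly independent over ℚ. Let v := (x·f·xᵀ, (f+fᵀ)·xᵀ) ∈ ℝ^{2d+1}. Then the set {m·v + k : m ∈ ℤ, k ∈ ℤ^{2d+1}} is dense in ℝ^{2d+1}; equivalently, the cyclic subgroup of the torus ℝ^{2d+1}/ℤ^{2d+1} generated by the class of v is dense. (This is the density claim of Remark 5.4(2) of the paper, showing that the multiples of the Ribet section are dense in a codimension-one circle bundle, so that the image of the Ribet section is not contained in a torsion translate of a proper subgroup scheme.) -/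
open Matrix

noncomputable section

open MeasureTheory UnitAddTorus in
lemma kron_integral {ι : Type*} [Fintype ι] (g : UnitAddTorus ι)
    (hg : ∀ n : ι → ℤ, mFourier n g = 1 → n = 0)
    (μ ν : Measure (UnitAddTorus ι)) [IsProbabilityMeasure μ] [IsProbabilityMeasure ν]
    (hμ : μ.map (fun t => g + t) = μ) (hν : ν.map (fun t => g + t) = ν)
    (F : C(UnitAddTorus ι, ℂ)) : ∫ t, F t ∂μ = ∫ t, F t ∂ν := by
  have key : ∀ (ρ : Measure (UnitAddTorus ι)) [IsProbabilityMeasure ρ],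
      ρ.map (fun t => g + t) = ρ → ∀ n : ι → ℤ, n ≠ 0 → ∫ t, mFourier n t ∂ρ = 0 := by
    intro ρ _ hρ n hn
    have h1 : ∫ t, mFourier n t ∂ρ = mFourier n g * ∫ t, mFourier n t ∂ρ := by
      conv_lhs => rw [← hρ]
      rw [integral_map (by fun_prop) (by fun_prop), ← integral_const_mul]
      congr 1
      ext t
      simp only [mFourier, ContinuousMap.coe_mk, Pi.add_apply, ← Finset.prod_mul_distrib]
      refine Finset.prod_congr rfl fun i _ => ?_
      simp [fourier_apply, smul_add, AddCircle.toCircle_add]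
    have h2 : (1 - mFourier n g) * ∫ t, mFourier n t ∂ρ = 0 := by linear_combination h1
    rcases mul_eq_zero.1 h2 with h | h
    · exact absurd (hg n (sub_eq_zero.1 h).symm) hn
    · exact h
  have hint : ∀ (ρ : Measure (UnitAddTorus ι)) [IsProbabilityMeasure ρ]
      (G : C(UnitAddTorus ι, ℂ)), Integrable (fun t => G t) ρ := by
    intro ρ _ G
    exact (BoundedContinuousFunction.mkOfCompact G).integrable ρ
  have hcont : ∀ (ρ : Measure (UnitAddTorus ι)) [IsProbabilityMeasure ρ],
      Continuous (fun G : C(UnitAddTorus ι, ℂ) => ∫ t, G t ∂ρ) := by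
    intro ρ _
    refine (LipschitzWith.of_dist_le_mul (K := 1) fun G G' => ?_).continuous
    rw [dist_eq_norm, ← integral_sub (hint ρ G) (hint ρ G'), dist_eq_norm]
    refine (norm_integral_le_of_norm_le_const (C := ‖G - G'‖) (ae_of_all _ fun t => ?_)).trans ?_
    · exact (G - G').norm_coe_le_norm t
    · simp
  have hF : F ∈ (Submodule.span ℂ (Set.range (mFourier (d := ι)))).topologicalClosure := by
    rw [span_mFourier_closure_eq_top]; trivial
  have hF' : F ∈ closure ((Submodule.span ℂ (Set.range (mFourier (d := ι))) : Submodule ℂ _) :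
      Set C(UnitAddTorus ι, ℂ)) := hF
  refine closure_minimal (t := {G : C(UnitAddTorus ι, ℂ) | ∫ t, G t ∂μ = ∫ t, G t ∂ν}) ?_
    (isClosed_eq (hcont μ) (hcont ν)) hF'
  intro G hG
  induction hG using Submodule.span_induction with
  | mem G h =>
    obtain ⟨n, rfl⟩ := h
    by_cases hn : n = 0
    · subst hn
      simp [mFourier_zero]
    · simp [key μ hμ n hn, key ν hν n hn]
  | zero => simp
  | add G G' _ _ h h' =>
    simp only [Set.mem_setOf_eq, ContinuousMap.add_apply] at *
    rw [integral_add (hint _ _) (hint _ _), integral_add (hint _ _) (hint _ _), h, h']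
  | smul c G _ h =>
    simp only [Set.mem_setOf_eq, ContinuousMap.smul_apply] at *
    rw [integral_smul, integral_smul, h]

open MeasureTheory UnitAddTorus in
lemma kron_torus {ι : Type*} [Fintype ι] (g : UnitAddTorus ι)
    (hg : ∀ n : ι → ℤ, mFourier n g = 1 → n = 0) :
    Dense (AddSubgroup.zmultiples g : Set (UnitAddTorus ι)) := by
  set H := (AddSubgroup.zmultiples g).topologicalClosure with hH
  have hHc : IsClosed (H : Set (UnitAddTorus ι)) := AddSubgroup.isClosed_topologicalClosure _
  have hgH : g ∈ H := AddSubgroup.le_topologicalClosure _ (AddSubgroup.mem_zmultiples g)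
  haveI : CompactSpace H := isCompact_iff_compactSpace.1 hHc.isCompact
  let ν : Measure H := Measure.addHaarMeasure ⊤
  haveI : IsProbabilityMeasure ν := ⟨by
    simpa using Measure.addHaarMeasure_self (K₀ := (⊤ : TopologicalSpace.PositiveCompacts H))⟩
  let lam : Measure (UnitAddTorus ι) := Measure.addHaarMeasure ⊤
  haveI : IsProbabilityMeasure lam := ⟨by
    simpa using Measure.addHaarMeasure_self (K₀ := (⊤ : TopologicalSpace.PositiveCompacts (UnitAddTorus ι)))⟩
  let μ : Measure (UnitAddTorus ι) := ν.map (fun h : H => (h : UnitAddTorus ι))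
  have hm : Measurable (fun h : H => (h : UnitAddTorus ι)) := measurable_subtype_coe
  haveI : IsProbabilityMeasure μ := Measure.isProbabilityMeasure_map hm.aemeasurable
  have hμ : μ.map (fun t => g + t) = μ := by
    have h1 : ν.map (fun t => (⟨g, hgH⟩ : H) + t) = ν := map_add_left_eq_self ν _
    have h2 : μ = (ν.map (fun t => (⟨g, hgH⟩ : H) + t)).map (fun h : H => (h : UnitAddTorus ι)) := by
      rw [h1]
    conv_rhs => rw [h2]
    rw [Measure.map_map (by fun_prop) hm, Measure.map_map hm (by fun_prop)]
    rfl
  have hlam : lam.map (fun t => g + t) = lam := map_add_left_eq_self lam g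
  have heq : μ = lam := by
    refine ext_of_forall_integral_eq_of_IsFiniteMeasure fun f => ?_
    have := kron_integral g hg μ lam hμ hlam ⟨fun t => ((f t : ℝ) : ℂ), by fun_prop⟩
    simp only [ContinuousMap.coe_mk] at this
    rw [integral_complex_ofReal, integral_complex_ofReal] at this
    exact_mod_cast this
  have h0 : lam (H : Set (UnitAddTorus ι))ᶜ = 0 := by
    rw [← heq, Measure.map_apply hm hHc.measurableSet.compl]
    convert measure_empty (μ := ν)
    ext h
    simp
  have h1 := (hHc.isOpen_compl.measure_eq_zero_iff lam).1 h0
  rw [dense_iff_closure_eq]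
  have : (H : Set (UnitAddTorus ι)) = Set.univ := by simpa using h1
  exact this

lemma kron_real {ι : Type*} [Fintype ι] (v : ι → ℝ)
    (hv : ∀ (n : ι → ℤ) (k : ℤ), ∑ i, (n i : ℝ) * v i = k → n = 0) :
    Dense {y : ι → ℝ | ∃ (m : ℤ) (k : ι → ℤ), y = fun i => (m : ℝ) * v i + (k i : ℝ)} := by
  let π : (ι → ℝ) → UnitAddTorus ι := Pi.map (fun _ (r : ℝ) => (r : UnitAddCircle))
  have hπ : IsOpenMap π :=
    (IsOpenQuotientMap.piMap fun _ => QuotientAddGroup.isOpenQuotientMap_mk).isOpenMap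
  have hd := kron_torus (π v) (by
    intro n hn
    have h : UnitAddTorus.mFourier n (π v) =
        Complex.exp (2 * Real.pi * Complex.I * ((∑ i, (n i : ℝ) * v i : ℝ) : ℂ)) := by
      simp only [UnitAddTorus.mFourier, ContinuousMap.coe_mk, π, Pi.map]
      push_cast
      rw [Finset.mul_sum, Complex.exp_sum]
      refine Finset.prod_congr rfl fun i _ => ?_
      rw [fourier_coe_apply]
      congr 1
      push_cast
      ring
    rw [h, Complex.exp_eq_one_iff] at hn
    obtain ⟨k, hk⟩ := hn
    refine hv n k ?_
    have h2 := Complex.two_pi_I_ne_zero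
    have : (((∑ i, (n i : ℝ) * v i : ℝ) : ℂ)) = ((k : ℝ) : ℂ) := by
      apply mul_left_cancel₀ h2
      rw [hk]; push_cast; ring
    exact_mod_cast this)
  refine (hd.preimage hπ).mono ?_
  rintro y ⟨m, hm⟩
  have : ∀ i, ∃ k : ℤ, y i = m * v i + k := by
    intro i
    have h := congrFun hm i
    have h' : ((m • v i : ℝ) : UnitAddCircle) = (y i : UnitAddCircle) := by
      simpa [π] using h
    rw [eq_comm, ← sub_eq_zero, ← AddCircle.coe_sub, AddCircle.coe_eq_zero_iff] at h'
    obtain ⟨k, hk⟩ := h'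
    refine ⟨k, ?_⟩
    simp at hk
    linarith
  choose k hk using this
  exact ⟨m, k, funext hk⟩

theorem ribet_multiples_dense (d : ℕ) (hd : 1 ≤ d)
    (f : Matrix (Fin (2 * d)) (Fin (2 * d)) ℤ)
    (hdet : (f + fᵀ).det ≠ 0)
    (x : Fin (2 * d) → ℝ)
    (hli : LinearIndependent ℚ
      (Sum.elim (fun _ : Unit => (1 : ℝ))
        (Sum.elim (fun _ : Unit => x ⬝ᵥ ((f.map fun k : ℤ => (k : ℝ)) *ᵥ x)) x))) :
    Dense {y : Unit ⊕ Fin (2 * d) → ℝ |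
      ∃ (m : ℤ) (k : Unit ⊕ Fin (2 * d) → ℤ),
        y = fun i =>
          (m : ℝ) * Sum.elim (fun _ : Unit => x ⬝ᵥ ((f.map fun k : ℤ => (k : ℝ)) *ᵥ x))
            (((f.map fun k : ℤ => (k : ℝ)) + (f.map fun k : ℤ => (k : ℝ))ᵀ) *ᵥ x) i
            + (k i : ℝ)} := by
  apply kron_real
  intro n k h
  rw [Fintype.linearIndependent_iff] at hli
  set w : Fin (2 * d) → ℤ := (fun i => n (Sum.inr i)) ᵥ* (f + fᵀ) with hw
  have hsum : ∑ i, (n (Sum.inr i) : ℝ) *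
      (((f.map fun k : ℤ => (k : ℝ)) + (f.map fun k : ℤ => (k : ℝ))ᵀ) *ᵥ x) i
      = ∑ j, (w j : ℝ) * x j := by
    simp only [hw, mulVec, vecMul, dotProduct, Finset.mul_sum, Matrix.add_apply, Matrix.map_apply,
      Matrix.transpose_apply, Int.cast_sum, Int.cast_mul, Int.cast_add, Finset.sum_mul]
    rw [Finset.sum_comm]
    simp only [mul_assoc]
  have hz := hli (Sum.elim (fun _ => -(k : ℚ))
    (Sum.elim (fun _ => (n (Sum.inl ()) : ℚ)) (fun j => (w j : ℚ)))) (by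
      simp only [Fintype.sum_sum_type, Sum.elim_inl, Sum.elim_inr, Finset.univ_unique,
        Finset.sum_singleton] at h ⊢
      rw [hsum] at h
      simp only [Rat.smul_def]
      push_cast
      have e : (default : Unit) = () := rfl
      rw [e] at h
      linarith)
  have h0 : n (Sum.inl ()) = 0 := by simpa using hz (Sum.inr (Sum.inl ()))
  have h1 : w = 0 := by
    ext j
    simpa using hz (Sum.inr (Sum.inr j))
  have h2 := Matrix.eq_zero_of_vecMul_eq_zero hdet h1
  ext i
  rcases i with ⟨⟩ | i
  · exact h0
  · exact congrFun h2 i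
end
end

section
/- For all F and F' in D_Ψ there exists a real matrix g ∈ M_{2d}(ℝ) with gᵀ·J·g = J such that the ℂ-linear extension of g to ℂ^{2d} maps F onto F'. (This is the transitivity of the action of Sp(Ψ)(ℝ) on D_Ψ proved in Section 4.2 of the paper.) -/
open Matrix Complex

noncomputable section

open scoped MatrixOrder ComplexOrder

/-- complexified J -/
abbrev JC (d : ℕ) : Matrix (Fin d ⊕ Fin d) (Fin d ⊕ Fin d) ℂ :=
  (Jmat d).map (fun r : ℝ => (r : ℂ))

lemma exists_normalizer {n : ℕ} (M : Matrix (Fin n) (Fin n) ℂ) (hM : M.PosDef) :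
    ∃ C : Matrix (Fin n) (Fin n) ℂ, IsUnit C ∧ Cᴴ * M * C = 1 := by
  have hu := hM.isUnit
  obtain ⟨B, hB⟩ := CStarAlgebra.nonneg_iff_eq_star_mul_self.mp hM.posSemidef.nonneg
  rw [star_eq_conjTranspose] at hB
  have hBu : IsUnit B := by
    rw [hB] at hu
    exact isUnit_of_mul_isUnit_right hu
  have hd : IsUnit B.det := (Matrix.isUnit_iff_isUnit_det B).1 hBu
  refine ⟨B⁻¹, (Matrix.isUnit_nonsing_inv_iff).2 hBu, ?_⟩
  rw [hB]
  have h1 : B * B⁻¹ = 1 := Matrix.mul_nonsing_inv B hd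
  calc (B⁻¹)ᴴ * (Bᴴ * B) * B⁻¹ = ((B⁻¹)ᴴ * Bᴴ) * (B * B⁻¹) := by simp only [Matrix.mul_assoc]
    _ = 1 := by rw [← conjTranspose_mul, h1]; simp

lemma JC_conjTranspose (d : ℕ) : (JC d)ᴴ = - JC d := by
  ext (i | i) (j | j) <;> simp [JC, Jmat, Matrix.one_apply, eq_comm]

lemma JC_star_mulVec (d : ℕ) (w : Vd d) : star (JC d *ᵥ w) = JC d *ᵥ star w := by
  ext i
  simp [Matrix.mulVec, dotProduct, JC]

lemma exists_frame (d : ℕ) (F : Submodule ℂ (Vd d)) (hF : F ∈ DPsi d) :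
    ∃ E : Matrix (Fin d ⊕ Fin d) (Fin d) ℂ,
      LinearMap.range E.mulVecLin = F ∧ Eᵀ * JC d * E = 0 ∧
      Eᴴ * JC d * E = (2 * Complex.I) • (1 : Matrix (Fin d) (Fin d) ℂ) := by
  obtain ⟨hr, hiso, hpos⟩ := hF
  let b := Module.finBasisOfFinrankEq ℂ F hr
  let B : Matrix (Fin d ⊕ Fin d) (Fin d) ℂ := Matrix.of fun i j => (b j : Vd d) i
  have hBmul : ∀ z, B *ᵥ z = ((∑ j, z j • b j : F) : Vd d) := by
    intro z
    ext i
    simp [B, Matrix.mulVec, dotProduct, mul_comm]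
  have hBF : ∀ z, B *ᵥ z ∈ F := fun z => by rw [hBmul]; exact Submodule.coe_mem _
  have hBr : LinearMap.range B.mulVecLin = F := by
    apply le_antisymm
    · rintro _ ⟨z, rfl⟩
      exact hBF z
    · intro v hv
      refine ⟨fun j => b.repr ⟨v, hv⟩ j, ?_⟩
      rw [mulVecLin_apply, hBmul, b.sum_repr]
  have hBinj : ∀ z, B *ᵥ z = 0 → z = 0 := by
    intro z hz
    rw [hBmul] at hz
    have hz' : (∑ j, z j • b j : F) = 0 := Subtype.ext hz
    have := Fintype.linearIndependent_iff.1 b.linearIndependent z hz'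
    exact funext this
  have hBiso : Bᵀ * JC d * B = 0 := by
    ext i j
    have h := hiso _ (b i).2 _ (b j).2
    rw [omegaC, dotProduct_mulVec] at h
    simpa [Matrix.mul_apply, Matrix.vecMul, dotProduct, B] using h
  let M : Matrix (Fin d) (Fin d) ℂ := (-Complex.I / 2) • (Bᴴ * JC d * B)
  have hM : M.PosDef := by
    refine Matrix.PosDef.of_dotProduct_mulVec_pos ?_ ?_
    · unfold Matrix.IsHermitian
      simp only [M, conjTranspose_smul, conjTranspose_mul, conjTranspose_conjTranspose,
        JC_conjTranspose]
      simp [Matrix.mul_assoc, neg_div]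
    · intro z hz
      obtain ⟨r, hr0, hr1⟩ := hpos (B *ᵥ z) (hBF z) (fun h => hz (hBinj z h))
      have hstar : (fun i => (starRingEnd ℂ) ((B *ᵥ z) i)) = star (B *ᵥ z) := rfl
      rw [hstar, omegaC] at hr1
      have key : star z ⬝ᵥ (M *ᵥ z) = ((r / 2 : ℝ) : ℂ) := by
        have h2 := congrArg star hr1
        have h3 : star (B *ᵥ z ⬝ᵥ (JC d *ᵥ star (B *ᵥ z)))
            = star z ⬝ᵥ ((Bᴴ * JC d * B) *ᵥ z) := by
          rw [← star_dotProduct_star, JC_star_mulVec, star_star, dotProduct_comm,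
            ← mulVec_mulVec, ← mulVec_mulVec, star_mulVec, ← dotProduct_mulVec]
        rw [star_mul, h3] at h2
        simp only [M, smul_mulVec, dotProduct_smul, smul_eq_mul]
        simp at h2
        push_cast
        rw [← h2]; ring
      rw [key]
      exact_mod_cast half_pos hr0
  obtain ⟨C, hCu, hC⟩ := exists_normalizer M hM
  refine ⟨B * C, ?_, ?_, ?_⟩
  · rw [mulVecLin_mul, LinearMap.range_comp_of_range_eq_top, hBr]
    rw [LinearMap.range_eq_top]
    exact Matrix.mulVec_surjective_iff_isUnit.2 hCu
  · rw [transpose_mul]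
    calc Cᵀ * Bᵀ * JC d * (B * C) = Cᵀ * (Bᵀ * JC d * B) * C := by simp only [Matrix.mul_assoc]
      _ = 0 := by rw [hBiso]; simp
  · rw [conjTranspose_mul, ← hC]
    simp only [M, Matrix.mul_smul, Matrix.smul_mul, smul_smul, Matrix.mul_assoc]
    have : 2 * Complex.I * (-Complex.I / 2) = 1 := by
      linear_combination -Complex.I_mul_I
    rw [this, one_smul]

/-- The standard frame. -/
def stdFrame (d : ℕ) : Matrix (Fin d ⊕ Fin d) (Fin d) ℂ :=
  fromRows (Complex.I • (1 : Matrix (Fin d) (Fin d) ℂ)) 1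

lemma exists_symp (d : ℕ) (F : Submodule ℂ (Vd d)) (hF : F ∈ DPsi d) :
    ∃ G : Matrix (Fin d ⊕ Fin d) (Fin d ⊕ Fin d) ℝ, G ∈ symplecticGroup (Fin d) ℝ ∧
      LinearMap.range (Matrix.mulVecLin (((G.map fun r : ℝ => (r : ℂ)) * stdFrame d :
        Matrix (Fin d ⊕ Fin d) (Fin d) ℂ))) = F := by
  obtain ⟨E, hE, h0, h1⟩ := exists_frame d F hF
  let X : Matrix (Fin d ⊕ Fin d) (Fin d) ℝ := E.map Complex.re
  let Y : Matrix (Fin d ⊕ Fin d) (Fin d) ℝ := E.map Complex.im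
  let c : ℝ →+* ℂ := Complex.ofRealHom
  have hEXY : E = X.map c + Complex.I • Y.map c := by
    ext i j
    simp [X, Y, c, mul_comm Complex.I, Complex.re_add_im]
  have hEt : Eᵀ = (Xᵀ).map c + Complex.I • (Yᵀ).map c := by
    conv_lhs => rw [hEXY]
    rfl
  have hEh : Eᴴ = (Xᵀ).map c - Complex.I • (Yᵀ).map c := by
    ext i j
    apply Complex.ext <;> simp [X, Y, c]
  have hJ : JC d = (Jmat d).map c := rfl
  have e0 : Eᵀ * JC d * E = (Xᵀ * Jmat d * X - Yᵀ * Jmat d * Y).map c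
      + Complex.I • (Xᵀ * Jmat d * Y + Yᵀ * Jmat d * X).map c := by
    rw [hEt, hEXY, hJ, Matrix.map_sub c (map_sub c), Matrix.map_add c (map_add c)]
    simp only [Matrix.map_mul, Matrix.add_mul, Matrix.mul_add, Matrix.smul_mul, Matrix.mul_smul,
      smul_add, smul_smul, Complex.I_mul_I, neg_smul, one_smul]
    abel
  have e1 : Eᴴ * JC d * E = (Xᵀ * Jmat d * X + Yᵀ * Jmat d * Y).map c
      + Complex.I • (Xᵀ * Jmat d * Y - Yᵀ * Jmat d * X).map c := by
    rw [hEh, hEXY, hJ, Matrix.map_sub c (map_sub c), Matrix.map_add c (map_add c)]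
    simp only [Matrix.map_mul, Matrix.sub_mul, Matrix.mul_add, Matrix.smul_mul, Matrix.mul_smul,
      smul_add, smul_sub, smul_smul, Complex.I_mul_I, neg_smul, one_smul]
    abel
  rw [h0] at e0
  rw [h1] at e1
  generalize hXX : Xᵀ * Jmat d * X = XX at e0 e1
  generalize hYY : Yᵀ * Jmat d * Y = YY at e0 e1
  generalize hXY : Xᵀ * Jmat d * Y = XY at e0 e1
  generalize hYX : Yᵀ * Jmat d * X = YX at e0 e1
  have ent : ∀ i j, XX i j = 0 ∧ YY i j = 0 ∧ XY i j = (1 : Matrix (Fin d) (Fin d) ℝ) i j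
      ∧ YX i j = - (1 : Matrix (Fin d) (Fin d) ℝ) i j := by
    intro i j
    have a := congrFun (congrFun e0 i) j
    have b := congrFun (congrFun e1 i) j
    have a1 := congrArg Complex.re a
    have a2 := congrArg Complex.im a
    have b1 := congrArg Complex.re b
    have b2 := congrArg Complex.im b
    by_cases hij : i = j
    · subst hij
      simp [c] at a1 a2 b1 b2
      simp
      refine ⟨?_, ?_, ?_, ?_⟩ <;> linarith
    · simp [c, hij] at a1 a2 b1 b2
      simp [hij]
      refine ⟨?_, ?_, ?_, ?_⟩ <;> linarith
  refine ⟨fromCols Y X, ?_, ?_⟩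
  · rw [SymplecticGroup.mem_iff']
    change _ * Jmat d * _ = Jmat d
    rw [transpose_fromCols, fromRows_mul, fromRows_mul_fromCols, hXX, hYY, hXY, hYX, Jmat]
    congr 1 <;> ext i j
    · exact (ent i j).2.1
    · exact (ent i j).2.2.2
    · exact (ent i j).2.2.1
    · exact (ent i j).1
  · rw [stdFrame, fromCols_map, fromCols_mul_fromRows, ← hE]
    congr 2
    conv_rhs => rw [hEXY]
    rw [Matrix.mul_smul, Matrix.mul_one, Matrix.mul_one, add_comm]
    rfl

/-- Transitivity of the action of `Sp(Ψ)(ℝ)` on `D_Ψ` (Section 4.2): for all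
`F, F' ∈ D_Ψ` there is a real matrix `g` with `gᵀ·J·g = J` whose ℂ-linear extension
maps `F` onto `F'`. -/
theorem sp_transitive_on_DPsi (d : ℕ) (hd : 1 ≤ d)
    (F F' : Submodule ℂ (Vd d)) (hF : F ∈ DPsi d) (hF' : F' ∈ DPsi d) :
    ∃ g : Matrix (Fin d ⊕ Fin d) (Fin d ⊕ Fin d) ℝ,
      gᵀ * Jmat d * g = Jmat d ∧
      Submodule.map ((g.map fun r : ℝ => (r : ℂ)).mulVecLin) F = F' := by
  obtain ⟨G, hG, hGF⟩ := exists_symp d F hF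
  obtain ⟨G', hG', hGF'⟩ := exists_symp d F' hF'
  let A : symplecticGroup (Fin d) ℝ := ⟨G, hG⟩
  let A' : symplecticGroup (Fin d) ℝ := ⟨G', hG'⟩
  refine ⟨((A' * A⁻¹ : symplecticGroup (Fin d) ℝ) : Matrix _ _ ℝ),
    SymplecticGroup.mem_iff'.1 (A' * A⁻¹).2, ?_⟩
  have h : ((A' * A⁻¹ : symplecticGroup (Fin d) ℝ) : Matrix _ _ ℝ) * G = G' :=
    congrArg Subtype.val (inv_mul_cancel_right A' A)
  have h' : (((A' * A⁻¹ : symplecticGroup (Fin d) ℝ) : Matrix _ _ ℝ).map fun r : ℝ => (r : ℂ))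
      * (G.map fun r : ℝ => (r : ℂ)) = (G'.map fun r : ℝ => (r : ℂ)) := by
    rw [← h]
    exact (Matrix.map_mul (f := Complex.ofRealHom)).symm
  rw [← hGF, ← hGF', ← LinearMap.range_comp, ← mulVecLin_mul, ← Matrix.mul_assoc, h']
end
end

section
/- Let g ∈ M_{2d}(ℝ) and μ > 0 be such that gᵀ·J·g = μ·J. Then for every F ∈ D_Ψ, the image of F under the ℂ-linear extension of g belongs to D_Ψ. (This is the claim of Section 4.2 of the paper that GSp_Ψ(ℝ)⁺ acts on D_Ψ.) -/
open Matrix Complex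

noncomputable section

theorem omegaC_mulVec (d : ℕ)
    (g : Matrix (Fin d ⊕ Fin d) (Fin d ⊕ Fin d) ℝ) (μ : ℝ)
    (hg : gᵀ * Jmat d * g = μ • Jmat d) (x y : Vd d) :
    omegaC d ((g.map fun r : ℝ => (r : ℂ)) *ᵥ x) ((g.map fun r : ℝ => (r : ℂ)) *ᵥ y)
      = μ * omegaC d x y := by
  have h := congrArg (fun M => M.map Complex.ofRealHom) hg
  simp only [Matrix.map_mul] at h
  have h2 : (g.map fun r : ℝ => (r : ℂ))ᵀ * (Jmat d).map (fun r : ℝ => (r : ℂ)) *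
      (g.map fun r : ℝ => (r : ℂ)) = (μ : ℂ) • (Jmat d).map (fun r : ℝ => (r : ℂ)) := by
    refine Eq.trans h ?_
    ext i j
    simp
  unfold omegaC
  rw [← smul_eq_mul, ← dotProduct_smul, ← Matrix.smul_mulVec, ← h2, ← Matrix.mulVec_mulVec,
    ← Matrix.mulVec_mulVec, Matrix.dotProduct_mulVec x, Matrix.vecMul_transpose]

theorem conj_mulVec_real (d : ℕ)
    (g : Matrix (Fin d ⊕ Fin d) (Fin d ⊕ Fin d) ℝ) (v : Vd d) :
    (fun i => (starRingEnd ℂ) (((g.map fun r : ℝ => (r : ℂ)) *ᵥ v) i)) =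
      (g.map fun r : ℝ => (r : ℂ)) *ᵥ (fun i => (starRingEnd ℂ) (v i)) := by
  ext i
  simp [Matrix.mulVec, dotProduct, map_sum]

/-- Section 4.2: the group `GSp_Ψ(ℝ)⁺` acts on `D_Ψ`: if `g` is a real matrix and
`μ > 0` with `gᵀ·J·g = μ·J`, then for every `F ∈ D_Ψ` the image of `F` under the
ℂ-linear extension of `g` again belongs to `D_Ψ`. -/
theorem gsp_acts_on_DPsi (d : ℕ) (hd : 1 ≤ d)
    (g : Matrix (Fin d ⊕ Fin d) (Fin d ⊕ Fin d) ℝ) (μ : ℝ) (hμ : 0 < μ)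
    (hg : gᵀ * Jmat d * g = μ • Jmat d)
    (F : Submodule ℂ (Vd d)) (hF : F ∈ DPsi d) :
    Submodule.map ((g.map fun r : ℝ => (r : ℂ)).mulVecLin) F ∈ DPsi d := by
  obtain ⟨h1, h2, h3⟩ := hF
  refine ⟨?_, ?_, ?_⟩
  · rw [← LinearMap.range_domRestrict, LinearMap.finrank_range_of_inj, h1]
    rw [← LinearMap.ker_eq_bot, LinearMap.ker_eq_bot']
    rintro ⟨v, hv⟩ hgv
    by_contra hne
    have hv0 : v ≠ 0 := fun h => hne (by simpa using h)
    obtain ⟨r, hr, e⟩ := h3 v hv hv0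
    have hgv' : (g.map fun r : ℝ => (r : ℂ)) *ᵥ v = 0 := hgv
    have := omegaC_mulVec d g μ hg v (fun i => (starRingEnd ℂ) (v i))
    rw [hgv'] at this
    have h0 : (μ : ℂ) * omegaC d v (fun i => (starRingEnd ℂ) (v i)) = 0 := by
      rw [← this]; simp [omegaC]
    rcases mul_eq_zero.mp h0 with h | h
    · exact hμ.ne' (by exact_mod_cast h)
    · rw [h, mul_zero] at e
      exact hr.ne (by exact_mod_cast e)
  · rintro _ ⟨x, hx, rfl⟩ _ ⟨y, hy, rfl⟩
    rw [Matrix.mulVecLin_apply, Matrix.mulVecLin_apply, omegaC_mulVec d g μ hg, h2 x hx y hy,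
      mul_zero]
  · rintro _ ⟨v, hv, rfl⟩ hne
    have hv0 : v ≠ 0 := by
      rintro rfl
      exact hne (map_zero _)
    obtain ⟨r, hr, e⟩ := h3 v hv hv0
    refine ⟨μ * r, mul_pos hμ hr, ?_⟩
    rw [Matrix.mulVecLin_apply, conj_mulVec_real, omegaC_mulVec d g μ hg, mul_left_comm, e]
    push_cast
    rfl
end
end

section
/- Let τ ∈ M_d(ℂ), u, x₁, x₂ ∈ M_{1,d}(ℂ), v, y₁, y₂ ∈ M_{d,1}(ℂ), and w, z ∈ ℂ. Let N ∈ M_{2d+2}(ℂ) be the block matrix [[1, 2πi·x₁, 2πi·x₂, 2πi·z],[0, 1_d, 0, y₁],[0, 0, 1_d, y₂],[0, 0, 0, 1]]. Then N·S(τ,u,v,w) = S(τ, u', v', w') where u' = u + 2πi·x₁·τ + 2πi·x₂, v' = v + y₁ − τ·y₂, and w' = w + 2πi·x₁·v + 2πi·z − u'·y₂. (This is the explicit formula, equation (11) of the paper, for the action of the unipotent group P^u(ℝ)U(ℂ) on the parameter space D.) -/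
open Matrix Complex

noncomputable section

/-- Index set for `ℂ^{2d+2}`. -/
abbrev Idx (d : ℕ) := Unit ⊕ ((Fin d ⊕ Fin d) ⊕ Unit)

/-- `ℂ^{2d+2}`. -/
abbrev V2 (d : ℕ) := Idx d → ℂ

/-- The `(2d+2) × (d+1)` block matrix with block rows `(u, w)`, `(τ, v)`, `(1_d, 0)`,
`(0, 1)`. -/
def colMat (d : ℕ) (τ : Matrix (Fin d) (Fin d) ℂ) (u : Fin d → ℂ) (v : Fin d → ℂ)
    (w : ℂ) : Matrix (Idx d) (Fin d ⊕ Unit) ℂ :=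
  Matrix.of fun i k =>
    match i, k with
    | Sum.inl _, Sum.inl j => u j
    | Sum.inl _, Sum.inr _ => w
    | Sum.inr (Sum.inl (Sum.inl i)), Sum.inl j => τ i j
    | Sum.inr (Sum.inl (Sum.inl i)), Sum.inr _ => v i
    | Sum.inr (Sum.inl (Sum.inr i)), Sum.inl j => if i = j then 1 else 0
    | Sum.inr (Sum.inl (Sum.inr _)), Sum.inr _ => 0
    | Sum.inr (Sum.inr _), Sum.inl _ => 0
    | Sum.inr (Sum.inr _), Sum.inr _ => 1

/-- `S(τ,u,v,w)`: the column span of the above block matrix. -/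
def Smod (d : ℕ) (τ : Matrix (Fin d) (Fin d) ℂ) (u : Fin d → ℂ) (v : Fin d → ℂ)
    (w : ℂ) : Submodule ℂ (V2 d) :=
  LinearMap.range (colMat d τ u v w).mulVecLin

/-- The block matrix
`N = [[1, 2πi·x₁, 2πi·x₂, 2πi·z],[0, 1_d, 0, y₁],[0, 0, 1_d, y₂],[0, 0, 0, 1]]`. -/
def Nmat (d : ℕ) (x₁ x₂ : Fin d → ℂ) (y₁ y₂ : Fin d → ℂ) (z : ℂ) :
    Matrix (Idx d) (Idx d) ℂ :=
  Matrix.of fun i k =>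
    match i, k with
    | Sum.inl _, Sum.inl _ => 1
    | Sum.inl _, Sum.inr (Sum.inl (Sum.inl j)) => twoPiI * x₁ j
    | Sum.inl _, Sum.inr (Sum.inl (Sum.inr j)) => twoPiI * x₂ j
    | Sum.inl _, Sum.inr (Sum.inr _) => twoPiI * z
    | Sum.inr (Sum.inl (Sum.inl i)), Sum.inr (Sum.inl (Sum.inl j)) =>
        if i = j then 1 else 0
    | Sum.inr (Sum.inl (Sum.inl i)), Sum.inr (Sum.inr _) => y₁ i
    | Sum.inr (Sum.inl (Sum.inr i)), Sum.inr (Sum.inl (Sum.inr j)) =>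
        if i = j then 1 else 0
    | Sum.inr (Sum.inl (Sum.inr i)), Sum.inr (Sum.inr _) => y₂ i
    | Sum.inr (Sum.inr _), Sum.inr (Sum.inr _) => 1
    | _, _ => 0

/-- Column operation matrix `[[1, y],[0, 1]]`. -/
def Gmat (d : ℕ) (y : Fin d → ℂ) : Matrix (Fin d ⊕ Unit) (Fin d ⊕ Unit) ℂ :=
  Matrix.of fun i k =>
    match i, k with
    | Sum.inl i, Sum.inl j => if i = j then 1 else 0
    | Sum.inl i, Sum.inr _ => y i
    | Sum.inr _, Sum.inl _ => 0
    | Sum.inr _, Sum.inr _ => 1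

theorem Gmat_mul_neg (d : ℕ) (y : Fin d → ℂ) : Gmat d y * Gmat d (-y) = 1 := by
  ext i k
  rcases i with i | i <;> rcases k with k | k <;>
    simp [Gmat, Matrix.mul_apply, Matrix.one_apply]

theorem Nmat_mul_colMat (d : ℕ)
    (τ : Matrix (Fin d) (Fin d) ℂ) (u : Fin d → ℂ) (v : Fin d → ℂ) (w : ℂ)
    (x₁ x₂ : Fin d → ℂ) (y₁ y₂ : Fin d → ℂ) (z : ℂ) :
    Nmat d x₁ x₂ y₁ y₂ z * colMat d τ u v w =
      colMat d τ
        (u + twoPiI • (x₁ ᵥ* τ) + twoPiI • x₂)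
        (v + y₁ - τ *ᵥ y₂)
        (w + twoPiI * (x₁ ⬝ᵥ v) + twoPiI * z -
          (u + twoPiI • (x₁ ᵥ* τ) + twoPiI • x₂) ⬝ᵥ y₂) * Gmat d y₂ := by
  ext i k
  rcases i with i | (i | i) | i <;> rcases k with k | k <;>
    simp [Gmat, Nmat, colMat, Matrix.mul_apply, Matrix.vecMul, Matrix.mulVec, dotProduct,
      Finset.mul_sum, mul_assoc, add_assoc]

/-- Equation (11): the explicit formula for the action of the unipotent group on the
parameter space `D`: `N·S(τ,u,v,w) = S(τ,u',v',w')` with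
`u' = u + 2πi·x₁·τ + 2πi·x₂`, `v' = v + y₁ − τ·y₂`, and
`w' = w + 2πi·x₁·v + 2πi·z − u'·y₂`. -/
theorem unipotent_action_formula (d : ℕ)
    (τ : Matrix (Fin d) (Fin d) ℂ) (u : Fin d → ℂ) (v : Fin d → ℂ) (w : ℂ)
    (x₁ x₂ : Fin d → ℂ) (y₁ y₂ : Fin d → ℂ) (z : ℂ) :
    Submodule.map (Nmat d x₁ x₂ y₁ y₂ z).mulVecLin (Smod d τ u v w) =
      Smod d τ
        (u + twoPiI • (x₁ ᵥ* τ) + twoPiI • x₂)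
        (v + y₁ - τ *ᵥ y₂)
        (w + twoPiI * (x₁ ⬝ᵥ v) + twoPiI * z -
          (u + twoPiI • (x₁ ᵥ* τ) + twoPiI • x₂) ⬝ᵥ y₂) := by
  have h := Nmat_mul_colMat d τ u v w x₁ x₂ y₁ y₂ z
  unfold Smod
  rw [← LinearMap.range_comp, ← Matrix.mulVecLin_mul, h, Matrix.mulVecLin_mul]
  apply LinearMap.range_comp_of_range_eq_top
  rw [LinearMap.range_eq_top]
  intro b
  refine ⟨Gmat d (-y₂) *ᵥ b, ?_⟩
  simp [Matrix.mulVec_mulVec, Gmat_mul_neg]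
end
end

section
/- Let τ ∈ M_d(ℂ), u ∈ M_{1,d}(ℂ), v ∈ M_{d,1}(ℂ), w ∈ ℂ, let μ ∈ ℂ be nonzero, and let a, b, c, e ∈ M_d(ℂ) be such that c·τ + e is invertible. Let M ∈ M_{2d+2}(ℂ) be the block matrix [[μ, 0, 0, 0],[0, a, b, 0],[0, c, e, 0],[0, 0, 0, 1]]. Then M·S(τ,u,v,w) = S(τ₁, u₁, v₁, w₁) where τ₁ = (a·τ + b)·(c·τ + e)^{-1}, u₁ = μ·u·(c·τ + e)^{-1}, v₁ = a·v − τ₁·c·v, and w₁ = μ·w − u₁·c·v. (This is the explicit formula, equation (12) of the paper, for the action of GSp_Ψ(ℝ)⁺ on the parameter space D.) -/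
open Matrix Complex

noncomputable section

/-- The block matrix `M = [[μ,0,0,0],[0,a,b,0],[0,c,e,0],[0,0,0,1]]`. -/
def Mmat (d : ℕ) (μ : ℂ) (a b c e : Matrix (Fin d) (Fin d) ℂ) :
    Matrix (Idx d) (Idx d) ℂ :=
  Matrix.of fun i k =>
    match i, k with
    | Sum.inl _, Sum.inl _ => μ
    | Sum.inr (Sum.inl (Sum.inl i)), Sum.inr (Sum.inl (Sum.inl j)) => a i j
    | Sum.inr (Sum.inl (Sum.inl i)), Sum.inr (Sum.inl (Sum.inr j)) => b i j
    | Sum.inr (Sum.inl (Sum.inr i)), Sum.inr (Sum.inl (Sum.inl j)) => c i j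
    | Sum.inr (Sum.inl (Sum.inr i)), Sum.inr (Sum.inl (Sum.inr j)) => e i j
    | Sum.inr (Sum.inr _), Sum.inr (Sum.inr _) => 1
    | _, _ => 0

lemma colMat_mulVec (d : ℕ) (τ : Matrix (Fin d) (Fin d) ℂ) (u v : Fin d → ℂ) (w : ℂ)
    (p : Fin d → ℂ) (t : ℂ) :
    colMat d τ u v w *ᵥ (Sum.elim p (fun _ => t)) =
      Sum.elim (fun _ => u ⬝ᵥ p + w * t)
        (Sum.elim (Sum.elim (τ *ᵥ p + t • v) p) (fun _ => t)) := by
  ext i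
  rcases i with i | (i | i) | i <;>
    simp [colMat, mulVec, dotProduct, Fintype.sum_sum_type, mul_comm]

lemma Mmat_mulVec (d : ℕ) (μ : ℂ) (a b c e : Matrix (Fin d) (Fin d) ℂ)
    (r : ℂ) (x y : Fin d → ℂ) (t : ℂ) :
    Mmat d μ a b c e *ᵥ (Sum.elim (fun _ => r) (Sum.elim (Sum.elim x y) (fun _ => t))) =
      Sum.elim (fun _ => μ * r)
        (Sum.elim (Sum.elim (a *ᵥ x + b *ᵥ y) (c *ᵥ x + e *ᵥ y)) (fun _ => t)) := by
  ext i
  rcases i with i | (i | i) | i <;>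
    simp [Mmat, mulVec, dotProduct, Fintype.sum_sum_type]

lemma key_formula (d : ℕ)
    (τ : Matrix (Fin d) (Fin d) ℂ) (u : Fin d → ℂ) (v : Fin d → ℂ) (w : ℂ)
    (μ : ℂ) (a b c e : Matrix (Fin d) (Fin d) ℂ)
    (hce : IsUnit (c * τ + e)) (p : Fin d → ℂ) (t : ℂ) :
    Mmat d μ a b c e *ᵥ (colMat d τ u v w *ᵥ (Sum.elim p (fun _ => t))) =
      colMat d ((a * τ + b) * (c * τ + e)⁻¹)
        (μ • (u ᵥ* (c * τ + e)⁻¹))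
        (a *ᵥ v - ((a * τ + b) * (c * τ + e)⁻¹) *ᵥ (c *ᵥ v))
        (μ * w - (μ • (u ᵥ* (c * τ + e)⁻¹)) ⬝ᵥ (c *ᵥ v)) *ᵥ
      (Sum.elim ((c * τ + e) *ᵥ p + t • (c *ᵥ v)) (fun _ => t)) := by
  have hdet := (Matrix.isUnit_iff_isUnit_det _).1 hce
  rw [colMat_mulVec, colMat_mulVec, Mmat_mulVec]
  have h1 : μ * (u ⬝ᵥ p + w * t) =
      (μ • (u ᵥ* (c * τ + e)⁻¹)) ⬝ᵥ ((c * τ + e) *ᵥ p + t • (c *ᵥ v)) +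
      (μ * w - (μ • (u ᵥ* (c * τ + e)⁻¹)) ⬝ᵥ (c *ᵥ v)) * t := by
    have : (u ᵥ* (c * τ + e)⁻¹) ⬝ᵥ ((c * τ + e) *ᵥ p) = u ⬝ᵥ p := by
      rw [dotProduct_mulVec, vecMul_vecMul, Matrix.nonsing_inv_mul _ hdet, vecMul_one]
    rw [dotProduct_add, dotProduct_smul, smul_dotProduct, smul_dotProduct, this]
    simp only [smul_eq_mul]
    ring
  have h2 : a *ᵥ (τ *ᵥ p + t • v) + b *ᵥ p =
      ((a * τ + b) * (c * τ + e)⁻¹) *ᵥ ((c * τ + e) *ᵥ p + t • (c *ᵥ v)) +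
      t • (a *ᵥ v - ((a * τ + b) * (c * τ + e)⁻¹) *ᵥ (c *ᵥ v)) := by
    have : ((a * τ + b) * (c * τ + e)⁻¹) *ᵥ ((c * τ + e) *ᵥ p) = (a * τ + b) *ᵥ p := by
      rw [mulVec_mulVec, Matrix.mul_assoc, Matrix.nonsing_inv_mul _ hdet, Matrix.mul_one]
    rw [mulVec_add _ ((c * τ + e) *ᵥ p), this, mulVec_smul, smul_sub, add_mulVec, mulVec_add,
      mulVec_smul, mulVec_mulVec]
    abel
  have h3 : c *ᵥ (τ *ᵥ p + t • v) + e *ᵥ p = (c * τ + e) *ᵥ p + t • (c *ᵥ v) := by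
    rw [add_mulVec, mulVec_add, mulVec_smul, mulVec_mulVec]
    abel
  rw [h1, h2, h3]

lemma elim_eta (d : ℕ) (x : Fin d ⊕ Unit → ℂ) :
    Sum.elim (fun i => x (Sum.inl i)) (fun _ => x (Sum.inr ())) = x := by
  ext i
  rcases i with i | i <;> rfl

/-- Equation (12): the explicit formula for the action of `GSp_Ψ(ℝ)⁺` on the
parameter space `D`: if `μ ≠ 0` and `c·τ + e` is invertible, then
`M·S(τ,u,v,w) = S(τ₁,u₁,v₁,w₁)` with `τ₁ = (a·τ+b)·(c·τ+e)⁻¹`,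
`u₁ = μ·u·(c·τ+e)⁻¹`, `v₁ = a·v − τ₁·c·v`, and `w₁ = μ·w − u₁·c·v`. -/
theorem gsp_action_formula (d : ℕ)
    (τ : Matrix (Fin d) (Fin d) ℂ) (u : Fin d → ℂ) (v : Fin d → ℂ) (w : ℂ)
    (μ : ℂ) (hμ : μ ≠ 0) (a b c e : Matrix (Fin d) (Fin d) ℂ)
    (hce : IsUnit (c * τ + e)) :
    Submodule.map (Mmat d μ a b c e).mulVecLin (Smod d τ u v w) =
      Smod d ((a * τ + b) * (c * τ + e)⁻¹)
        (μ • (u ᵥ* (c * τ + e)⁻¹))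
        (a *ᵥ v - ((a * τ + b) * (c * τ + e)⁻¹) *ᵥ (c *ᵥ v))
        (μ * w - (μ • (u ᵥ* (c * τ + e)⁻¹)) ⬝ᵥ (c *ᵥ v)) := by
  have hdet := (Matrix.isUnit_iff_isUnit_det _).1 hce
  ext y
  simp only [Smod, Submodule.mem_map, LinearMap.mem_range, mulVecLin_apply]
  constructor
  · rintro ⟨_, ⟨x, rfl⟩, rfl⟩
    rw [← elim_eta d x, key_formula d τ u v w μ a b c e hce]
    exact ⟨_, rfl⟩
  · rintro ⟨x, rfl⟩
    refine ⟨_, ⟨Sum.elim ((c * τ + e)⁻¹ *ᵥ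
      ((fun i => x (Sum.inl i)) - x (Sum.inr ()) • (c *ᵥ v))) (fun _ => x (Sum.inr ())), rfl⟩, ?_⟩
    rw [key_formula d τ u v w μ a b c e hce, mulVec_mulVec _ (c * τ + e) (c * τ + e)⁻¹,
      Matrix.mul_nonsing_inv _ hdet,
      one_mulVec, sub_add_cancel, elim_eta]
end
end
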